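/- arXiv:1011.0791 — 10 statements merged into one kernel-verified Lean document; each statement's English description precedes it below -/
import Mathlib

section
/- Let m₀, b₀, k₀, N, λ > 0. Every complex root s of the quadratic m₀·s² + (b₀·λ/N²)·s + (k₀·λ/N²) = 0 satisfies Re(s) ≤ −min( λ·b₀/(2·m₀·N²), k₀/b₀ ). -/
open Real

/-- Every complex root of `m₀s² + (b₀λ/N²)s + (k₀λ/N²) = 0` (with positive parameters)
satisfies `Re(s) ≤ -min(λb₀/(2m₀N²), k₀/b₀)`. -/
theorem stmt_4 (m₀ b₀ k₀ N lam : ℝ)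
    (hm : 0 < m₀) (hb : 0 < b₀) (hk : 0 < k₀) (hN : 0 < N) (hlam : 0 < lam)
    (s : ℂ)
    (hs : (m₀ : ℂ) * s ^ 2 + ((b₀ * lam / N ^ 2 : ℝ) : ℂ) * s
        + ((k₀ * lam / N ^ 2 : ℝ) : ℂ) = 0) :
    s.re ≤ -min (lam * b₀ / (2 * m₀ * N ^ 2)) (k₀ / b₀) := by
  obtain ⟨c, hc⟩ : ∃ c, c = lam / N ^ 2 := ⟨_, rfl⟩
  have hcpos : 0 < c := by rw [hc]; positivity
  have e1 : b₀ * lam / N ^ 2 = b₀ * c := by rw [hc]; ring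
  have e2 : k₀ * lam / N ^ 2 = k₀ * c := by rw [hc]; ring
  have e3 : lam * b₀ / (2 * m₀ * N ^ 2) = b₀ * c / (2 * m₀) := by
    rw [hc]; field_simp
  rw [e1, e2] at hs
  rw [e3]
  have hre := congrArg Complex.re hs
  have him := congrArg Complex.im hs
  simp only [pow_two, Complex.add_re, Complex.add_im, Complex.mul_re, Complex.mul_im,
    Complex.ofReal_re, Complex.ofReal_im, Complex.zero_re, Complex.zero_im] at hre him
  have him2 : s.im * (2 * m₀ * s.re + b₀ * c) = 0 := by linarith
  rcases mul_eq_zero.mp him2 with h | h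
  · rw [h] at hre
    have h1 : b₀ * s.re + k₀ ≤ 0 := by
      by_contra hcon
      have h2 := mul_pos hcpos (not_le.mp hcon)
      have h3 := mul_nonneg hm.le (mul_self_nonneg s.re)
      linarith
    have h4 : k₀ / b₀ ≤ -s.re := by
      rw [div_le_iff₀ hb]; linarith
    have := min_le_right (b₀ * c / (2 * m₀)) (k₀ / b₀)
    linarith
  · have h4 : b₀ * c / (2 * m₀) ≤ -s.re := by
      rw [div_le_iff₀ (by positivity)]; linarith
    have := min_le_left (b₀ * c / (2 * m₀)) (k₀ / b₀)
    linarith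
end

section
/- Let m₀, b₀, k₀, N > 0 and let λ be a real number for which there exists a nonzero twice continuously differentiable function φ : [0,1] → ℝ with φ''(x) + λ·φ(x) = 0 on [0,1], φ'(0) = 0 and φ(1) = 0. Then every complex root s of m₀·s² + (b₀·λ/N²)·s + (k₀·λ/N²) = 0 satisfies Re(s) ≤ −min( π²·b₀/(8·m₀·N²), k₀/b₀ ). Moreover, if λ = π²/4 and N > π·b₀/(4·√(m₀·k₀)), then every such root satisfies Re(s) = −π²·b₀/(8·m₀·N²). -/
open Real Set

theorem eig_bound (lam : ℝ) (φ φ' φ'' : ℝ → ℝ)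
    (h1 : ∀ x ∈ Icc (0:ℝ) 1, HasDerivWithinAt φ (φ' x) (Icc (0:ℝ) 1) x)
    (h2 : ∀ x ∈ Icc (0:ℝ) 1, HasDerivWithinAt φ' (φ'' x) (Icc (0:ℝ) 1) x)
    (hne : ∃ x ∈ Icc (0:ℝ) 1, φ x ≠ 0)
    (ho : ∀ x ∈ Icc (0:ℝ) 1, φ'' x + lam * φ x = 0)
    (h0 : φ' 0 = 0) (hone : φ 1 = 0) : π ^ 2 / 4 ≤ lam := by
  by_contra! hlt
  obtain ⟨μ, hμ0, hμ1, hμ2⟩ : ∃ μ : ℝ, 0 < μ ∧ μ < π / 2 ∧ lam < μ ^ 2 := by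
    have hp := Real.pi_pos
    have hM : max lam 0 < (π / 2) ^ 2 := max_lt (by nlinarith) (by positivity)
    obtain ⟨c, hc1, hc2⟩ := exists_between hM
    have hc0 : 0 < c := lt_of_le_of_lt (le_max_right _ _) hc1
    refine ⟨√c, Real.sqrt_pos.2 hc0, (Real.sqrt_lt' (by positivity)).2 hc2, ?_⟩
    rw [Real.sq_sqrt hc0.le]
    exact lt_of_le_of_lt (le_max_left _ _) hc1
  have hcos : ∀ x ∈ Icc (0:ℝ) 1, 0 < Real.cos (μ * x) := by
    intro x hx
    apply Real.cos_pos_of_mem_Ioo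
    have := Real.pi_pos
    have h3 : 0 ≤ μ * x := mul_nonneg hμ0.le hx.1
    have h4 : μ * x ≤ μ := by nlinarith [hx.2]
    constructor <;> linarith
  set T : ℝ → ℝ := fun x => μ * Real.tan (μ * x) with hT
  have hTd : ∀ x ∈ Icc (0:ℝ) 1, HasDerivAt T (μ ^ 2 + T x ^ 2) x := by
    intro x hx
    have hc := hcos x hx
    have hl : HasDerivAt (fun y : ℝ => μ * y) μ x := by
      simpa using (hasDerivAt_id x).const_mul μ
    have := ((Real.hasDerivAt_tan hc.ne').comp x hl).const_mul μ
    refine HasDerivAt.congr_deriv (f := T) this ?_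
    simp only [hT]
    rw [Real.tan_eq_sin_div_cos]
    field_simp
    linarith [Real.sin_sq_add_cos_sq (μ * x)]
  set H : ℝ → ℝ := fun x => φ x * φ' x + T x * (φ x * φ x) with hH
  have hHd : ∀ x ∈ Icc (0:ℝ) 1, HasDerivWithinAt H
      ((φ' x + T x * φ x) ^ 2 + (μ ^ 2 - lam) * φ x ^ 2) (Icc (0:ℝ) 1) x := by
    intro x hx
    have := ((h1 x hx).mul (h2 x hx)).add
      (((hTd x hx).hasDerivWithinAt).mul ((h1 x hx).mul (h1 x hx)))
    refine this.congr_deriv ?_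
    have e : φ'' x = - (lam * φ x) := by linarith [ho x hx]
    rw [e]
    simp only [Pi.mul_apply]
    ring
  have hmono : MonotoneOn H (Icc (0:ℝ) 1) := by
    apply monotoneOn_of_hasDerivWithinAt_nonneg (convex_Icc 0 1)
      (fun x hx => (hHd x hx).continuousWithinAt)
    · intro x hx
      exact (hHd x (interior_subset hx)).mono interior_subset
    · intro x hx
      have : 0 ≤ μ ^ 2 - lam := by linarith
      positivity
  have hH0 : H 0 = 0 := by simp [hH, hT, h0]
  have hH1 : H 1 = 0 := by simp [hH, hone]
  have hHz : ∀ x ∈ Icc (0:ℝ) 1, H x = 0 := by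
    intro x hx
    have a := hmono (left_mem_Icc.2 zero_le_one) hx hx.1
    have b := hmono hx (right_mem_Icc.2 zero_le_one) hx.2
    linarith
  obtain ⟨x, hx, hxn⟩ := hne
  have hz : HasDerivWithinAt H 0 (Icc (0:ℝ) 1) x :=
    (hasDerivWithinAt_const x (Icc (0:ℝ) 1) (0:ℝ)).congr hHz (hHz x hx)
  have hu := (uniqueDiffOn_Icc (zero_lt_one (α := ℝ)) x hx).eq_deriv _ (hHd x hx) hz
  have : 0 < (μ ^ 2 - lam) * φ x ^ 2 := mul_pos (by linarith) (by positivity)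
  nlinarith [sq_nonneg (φ' x + T x * φ x)]

/-- If `λ` is an eigenvalue of the boundary value problem `φ'' + λφ = 0`, `φ'(0) = 0`,
`φ(1) = 0`, then every complex root `s` of `m₀s² + (b₀λ/N²)s + (k₀λ/N²) = 0` satisfies
`Re(s) ≤ -min(π²b₀/(8m₀N²), k₀/b₀)`; moreover, if `λ = π²/4` and
`N > πb₀/(4√(m₀k₀))` then `Re(s) = -π²b₀/(8m₀N²)`. -/
theorem stmt_5 (m₀ b₀ k₀ N lam : ℝ)
    (hm : 0 < m₀) (hb : 0 < b₀) (hk : 0 < k₀) (hN : 0 < N)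
    (hex : ∃ φ φ' φ'' : ℝ → ℝ,
      (∀ x ∈ Icc (0:ℝ) 1, HasDerivWithinAt φ (φ' x) (Icc (0:ℝ) 1) x) ∧
      (∀ x ∈ Icc (0:ℝ) 1, HasDerivWithinAt φ' (φ'' x) (Icc (0:ℝ) 1) x) ∧
      ContinuousOn φ'' (Icc (0:ℝ) 1) ∧
      (∃ x ∈ Icc (0:ℝ) 1, φ x ≠ 0) ∧
      (∀ x ∈ Icc (0:ℝ) 1, φ'' x + lam * φ x = 0) ∧
      φ' 0 = 0 ∧ φ 1 = 0) :
    (∀ s : ℂ, (m₀ : ℂ) * s ^ 2 + ((b₀ * lam / N ^ 2 : ℝ) : ℂ) * s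
        + ((k₀ * lam / N ^ 2 : ℝ) : ℂ) = 0 →
      s.re ≤ -min (π ^ 2 * b₀ / (8 * m₀ * N ^ 2)) (k₀ / b₀)) ∧
    (lam = π ^ 2 / 4 → N > π * b₀ / (4 * Real.sqrt (m₀ * k₀)) →
      ∀ s : ℂ, (m₀ : ℂ) * s ^ 2 + ((b₀ * lam / N ^ 2 : ℝ) : ℂ) * s
          + ((k₀ * lam / N ^ 2 : ℝ) : ℂ) = 0 →
        s.re = -(π ^ 2 * b₀) / (8 * m₀ * N ^ 2)) := by
  obtain ⟨φ, φ', φ'', h1, h2, -, hne, ho, h0, hone⟩ := hex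
  have hl := eig_bound lam φ φ' φ'' h1 h2 hne ho h0 hone
  have hp := Real.pi_pos
  have hl0 : 0 < lam := lt_of_lt_of_le (by positivity) hl
  have hc : 0 < lam / N ^ 2 := by positivity
  have key : ∀ s : ℂ, (m₀ : ℂ) * s ^ 2 + ((b₀ * lam / N ^ 2 : ℝ) : ℂ) * s
        + ((k₀ * lam / N ^ 2 : ℝ) : ℂ) = 0 →
      (s.re = - (b₀ * (lam / N ^ 2)) / (2 * m₀)) ∨
      (m₀ * s.re ^ 2 + (lam / N ^ 2) * (b₀ * s.re + k₀) = 0) := by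
    intro s hs
    have hr := congrArg Complex.re hs
    have hi := congrArg Complex.im hs
    simp only [pow_two s, Complex.add_re, Complex.add_im, Complex.mul_re, Complex.mul_im,
      Complex.ofReal_re, Complex.ofReal_im, Complex.zero_re, Complex.zero_im] at hr hi
    rw [mul_div_assoc, mul_div_assoc] at hr
    rw [mul_div_assoc] at hi
    generalize lam / N ^ 2 = c at *
    have hi' : s.im * (2 * m₀ * s.re + b₀ * c) = 0 := by linarith
    rcases mul_eq_zero.1 hi' with h | h
    · right
      rw [h] at hr
      linarith
    · left
      field_simp
      linarith
  constructor
  · intro s hs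
    rcases key s hs with h | h
    · refine le_trans ?_ (neg_le_neg (min_le_left _ _))
      rw [h, neg_div, neg_le_neg_iff]
      have e : b₀ * (lam / N ^ 2) / (2 * m₀) = (4 * lam) * b₀ / (8 * m₀ * N ^ 2) := by
        field_simp
        ring
      rw [e]
      gcongr
      linarith
    · refine le_trans ?_ (neg_le_neg (min_le_right _ _))
      have h3 : b₀ * s.re + k₀ ≤ 0 := by
        by_contra! h4
        have := mul_pos hc h4
        nlinarith [mul_nonneg hm.le (sq_nonneg s.re)]
      rw [← neg_div, le_div_iff₀ hb]
      linarith
  · intro hlam hNN s hs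
    rcases key s hs with h | h
    · rw [h, hlam]
      field_simp
      ring
    · exfalso
      have hq : 0 < √(m₀ * k₀) := Real.sqrt_pos.2 (by positivity)
      have h5 : π * b₀ < N * (4 * √(m₀ * k₀)) := (div_lt_iff₀ (by positivity)).1 hNN
      have h6 : (π * b₀) ^ 2 < (N * (4 * √(m₀ * k₀))) ^ 2 :=
        pow_lt_pow_left₀ h5 (by positivity) (by norm_num)
      rw [mul_pow N, mul_pow 4, Real.sq_sqrt (by positivity)] at h6
      have h7 : b₀ ^ 2 * (lam / N ^ 2) < 4 * (m₀ * k₀) := by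
        rw [hlam, ← mul_div_assoc, div_lt_iff₀ (by positivity)]
        nlinarith
      generalize lam / N ^ 2 = c at *
      have h8 := mul_lt_mul_of_pos_left h7 hc
      have h9 : 4 * m₀ * (m₀ * s.re ^ 2 + c * (b₀ * s.re + k₀)) = 0 := by rw [h, mul_zero]
      nlinarith [sq_nonneg (2 * m₀ * s.re + b₀ * c)]
end

section
/- Let φ : [0,1] → ℝ be continuously differentiable with φ(1) = 0. Then ∫₀¹ φ'(x)² dx ≥ (π²/4)·∫₀¹ φ(x)² dx. -/
open Real Set

theorem stmt_7_aux (φ φ' : ℝ → ℝ)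
    (hd : ∀ x ∈ Icc (0:ℝ) 1, HasDerivWithinAt φ (φ' x) (Icc (0:ℝ) 1) x)
    (hc : ContinuousOn φ' (Icc (0:ℝ) 1))
    (h1 : φ 1 = 0) (c : ℝ) (c0 : 0 < c) (c1 : c < π / 2) :
    c ^ 2 * (∫ x in (0:ℝ)..1, φ x ^ 2) ≤ ∫ x in (0:ℝ)..1, φ' x ^ 2 := by
  have hφ : ContinuousOn φ (Icc (0:ℝ) 1) := fun x hx => (hd x hx).continuousWithinAt
  have hcos : ∀ x ∈ Icc (0:ℝ) 1, cos (c * x) ≠ 0 := by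
    intro x hx
    apply (cos_pos_of_mem_Ioo ⟨_, _⟩).ne'
    · nlinarith [hx.1, pi_pos, mul_nonneg c0.le hx.1]
    · nlinarith [hx.2]
  have ht : ContinuousOn (fun x => c * tan (c * x)) (Icc (0:ℝ) 1) := by
    intro x hx
    have h := (hasDerivAt_tan (hcos x hx)).continuousAt
    have h2 : ContinuousAt (fun x => c * tan (c * x)) x :=
      continuousAt_const.mul
        (ContinuousAt.comp (f := fun x => c * x) (g := tan) h (by fun_prop))
    exact h2.continuousWithinAt
  set t : ℝ → ℝ := fun x => c * tan (c * x) with htdef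
  have htd : ∀ x ∈ Icc (0:ℝ) 1, HasDerivAt t (c ^ 2 + t x ^ 2) x := by
    intro x hx
    have h := hasDerivAt_tan (hcos x hx)
    have h2 := (HasDerivAt.comp x (h := fun x => c * x) h
      ((hasDerivAt_id x).const_mul c)).const_mul c
    refine HasDerivAt.congr_deriv (f := t) h2 ?_
    have := hcos x hx
    simp only [htdef, tan_eq_sin_div_cos]
    field_simp
    linarith [sin_sq_add_cos_sq (c * x)]
  have hu : uIcc (0:ℝ) 1 = Icc 0 1 := uIcc_of_le zero_le_one
  have hD : ContinuousOn (fun x => (c ^ 2 + t x ^ 2) * φ x ^ 2 + t x * (2 * φ x * φ' x))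
      (Icc (0:ℝ) 1) := by fun_prop
  have key : ∫ x in (0:ℝ)..1, ((c ^ 2 + t x ^ 2) * φ x ^ 2 + t x * (2 * φ x * φ' x)) = 0 := by
    rw [intervalIntegral.integral_eq_sub_of_hasDerivAt_of_le (f := fun x => t x * φ x ^ 2)
      zero_le_one (by fun_prop)]
    · simp [h1, htdef]
    · intro x hx
      have hx' := Ioo_subset_Icc_self hx
      have h := (hd x hx').hasDerivAt (Icc_mem_nhds hx.1 hx.2)
      have h3 := (htd x hx').mul (h.pow 2)
      refine HasDerivAt.congr_deriv (f := fun x => t x * φ x ^ 2) h3 ?_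
      simp
    · exact (hu ▸ hD).intervalIntegrable
  have i1 : IntervalIntegrable (fun x => φ' x ^ 2) MeasureTheory.volume 0 1 := by
    apply ContinuousOn.intervalIntegrable; rw [hu]; fun_prop
  have i2 : IntervalIntegrable (fun x => c ^ 2 * φ x ^ 2) MeasureTheory.volume 0 1 := by
    apply ContinuousOn.intervalIntegrable; rw [hu]; fun_prop
  have i3 : IntervalIntegrable (fun x => (c ^ 2 + t x ^ 2) * φ x ^ 2 + t x * (2 * φ x * φ' x))
      MeasureTheory.volume 0 1 := by
    apply ContinuousOn.intervalIntegrable; rw [hu]; exact hD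
  have hs := intervalIntegral.integral_add i1 i3
  rw [key, add_zero] at hs
  rw [← intervalIntegral.integral_const_mul, ← hs]
  apply intervalIntegral.integral_mono_on zero_le_one i2 (i1.add i3)
  intro x _
  nlinarith [sq_nonneg (φ' x + t x * φ x)]

/-- Poincaré–Wirtinger type inequality: for continuously differentiable `φ` on `[0,1]`
with `φ(1) = 0`, `∫₀¹ φ'² ≥ (π²/4) ∫₀¹ φ²`. -/
theorem stmt_7 (φ φ' : ℝ → ℝ)
    (hd : ∀ x ∈ Icc (0:ℝ) 1, HasDerivWithinAt φ (φ' x) (Icc (0:ℝ) 1) x)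
    (hc : ContinuousOn φ' (Icc (0:ℝ) 1))
    (h1 : φ 1 = 0) :
    (∫ x in (0:ℝ)..1, φ' x ^ 2) ≥ (π ^ 2 / 4) * ∫ x in (0:ℝ)..1, φ x ^ 2 := by
  have hl : Filter.Tendsto (fun c : ℝ => c ^ 2 * ∫ x in (0:ℝ)..1, φ x ^ 2)
      (nhdsWithin (π / 2) (Iio (π / 2))) (nhds ((π / 2) ^ 2 * ∫ x in (0:ℝ)..1, φ x ^ 2)) := by
    apply Filter.Tendsto.mono_left _ nhdsWithin_le_nhds
    apply Continuous.tendsto (f := fun c : ℝ => c ^ 2 * ∫ x in (0:ℝ)..1, φ x ^ 2)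
    fun_prop
  have := le_of_tendsto hl (b := ∫ x in (0:ℝ)..1, φ' x ^ 2) (by
    filter_upwards [Ioo_mem_nhdsLT (show (0:ℝ) < π / 2 by positivity)] with c hcc
    exact stmt_7_aux φ φ' hd hc h1 c hcc.1 hcc.2)
  have e : (π / 2) ^ 2 = π ^ 2 / 4 := by ring
  rw [e] at this
  exact this
end

section
/- Let m, b : [0,1] → ℝ be continuous with 0 < m_min ≤ m(x) ≤ m_max and 0 < b_min ≤ b(x) ≤ b_max for all x ∈ [0,1]. If λ ∈ ℝ is such that there exists a nonzero twice continuously differentiable φ : [0,1] → ℝ with φ''(x) + λ·(m(x)/b(x))·φ(x) = 0 on [0,1], φ'(0) = 0 and φ(1) = 0, then λ ≥ π²·b_min/(4·m_max). -/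
open Real Set

/-- Eigenvalue lower bound for the weighted Sturm–Liouville problem
`φ'' + λ (m/b) φ = 0`, `φ'(0) = 0`, `φ(1) = 0` with `m_min ≤ m ≤ m_max`,
`b_min ≤ b ≤ b_max`: every eigenvalue satisfies `λ ≥ π² b_min/(4 m_max)`. -/
theorem stmt_9 (m b : ℝ → ℝ) (mmin mmax bmin bmax : ℝ)
    (hmc : ContinuousOn m (Icc (0:ℝ) 1)) (hbc : ContinuousOn b (Icc (0:ℝ) 1))
    (hmmin : 0 < mmin) (hbmin : 0 < bmin)
    (hmb : ∀ x ∈ Icc (0:ℝ) 1, mmin ≤ m x ∧ m x ≤ mmax)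
    (hbb : ∀ x ∈ Icc (0:ℝ) 1, bmin ≤ b x ∧ b x ≤ bmax)
    (lam : ℝ)
    (hex : ∃ φ φ' φ'' : ℝ → ℝ,
      (∀ x ∈ Icc (0:ℝ) 1, HasDerivWithinAt φ (φ' x) (Icc (0:ℝ) 1) x) ∧
      (∀ x ∈ Icc (0:ℝ) 1, HasDerivWithinAt φ' (φ'' x) (Icc (0:ℝ) 1) x) ∧
      ContinuousOn φ'' (Icc (0:ℝ) 1) ∧
      (∃ x ∈ Icc (0:ℝ) 1, φ x ≠ 0) ∧
      (∀ x ∈ Icc (0:ℝ) 1, φ'' x + lam * (m x / b x) * φ x = 0) ∧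
      φ' 0 = 0 ∧ φ 1 = 0) :
    lam ≥ π ^ 2 * bmin / (4 * mmax) := by
  obtain ⟨φ, φ', φ'', h1, h2, -, ⟨x0, hx0, hne⟩, hode, h0, hl⟩ := hex
  by_contra hcon
  have hlt : lam < π ^ 2 * bmin / (4 * mmax) := not_le.mp hcon
  have hz : (0:ℝ) ∈ Icc (0:ℝ) 1 := by simp
  have ho : (1:ℝ) ∈ Icc (0:ℝ) 1 := by simp
  have hmmax : 0 < mmax := by linarith [(hmb 0 hz).1, (hmb 0 hz).2]
  have hpi := Real.pi_pos
  obtain ⟨Q, hQ⟩ : ∃ Q, Q = max lam 0 * (mmax / bmin) := ⟨_, rfl⟩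
  have hQ0 : 0 ≤ Q := by rw [hQ]; positivity
  have hQlt : Q < (π / 2) ^ 2 := by
    have h : max lam 0 < π ^ 2 * bmin / (4 * mmax) := max_lt hlt (by positivity)
    calc Q < π ^ 2 * bmin / (4 * mmax) * (mmax / bmin) := by
          rw [hQ]; exact mul_lt_mul_of_pos_right h (by positivity)
      _ = (π / 2) ^ 2 := by field_simp; norm_num
  have hq : ∀ x ∈ Icc (0:ℝ) 1, lam * (m x / b x) ≤ Q := by
    intro x hx
    obtain ⟨ha, hb⟩ := hmb x hx
    obtain ⟨hc, hd⟩ := hbb x hx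
    have hm0 : 0 < m x := by linarith
    have hb0 : 0 < b x := by linarith
    rw [hQ]
    calc lam * (m x / b x) ≤ max lam 0 * (m x / b x) :=
          mul_le_mul_of_nonneg_right (le_max_left _ _) (by positivity)
      _ ≤ max lam 0 * (mmax / bmin) :=
          mul_le_mul_of_nonneg_left (div_le_div₀ hmmax.le hb hbmin hc) (le_max_right _ _)
  obtain ⟨c, hc1, hc2⟩ : ∃ c, √Q < c ∧ c < π / 2 :=
    exists_between ((Real.sqrt_lt' (by positivity)).2 hQlt)
  have hc0 : 0 < c := lt_of_le_of_lt (Real.sqrt_nonneg _) hc1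
  have hQc : Q < c ^ 2 := (Real.sqrt_lt' hc0).1 hc1
  have hcos : ∀ x ∈ Icc (0:ℝ) 1, cos (c * x) ≠ 0 := by
    intro x hx
    have h3 : 0 ≤ c * x := mul_nonneg hc0.le hx.1
    have h4 : c * x ≤ c := mul_le_of_le_one_right hc0.le hx.2
    exact (Real.cos_pos_of_mem_Ioo ⟨by linarith, by linarith⟩).ne'
  obtain ⟨F, hF⟩ : ∃ F : ℝ → ℝ, F = fun x => φ x * φ' x + c * tan (c * x) * (φ x * φ x) := ⟨_, rfl⟩
  have hder : ∀ x ∈ Icc (0:ℝ) 1, HasDerivWithinAt F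
      ((φ' x + c * tan (c * x) * φ x) ^ 2 + (c ^ 2 - lam * (m x / b x)) * (φ x) ^ 2)
      (Icc (0:ℝ) 1) x := by
    intro x hx
    have ht : HasDerivAt (fun x => tan (c * x)) (1 / cos (c * x) ^ 2 * (c * 1)) x :=
      (Real.hasDerivAt_tan (hcos x hx)).comp x ((hasDerivAt_id x).const_mul c)
    have hd := ((h1 x hx).mul (h2 x hx)).add
      ((ht.hasDerivWithinAt.const_mul c).mul ((h1 x hx).mul (h1 x hx)))
    have hs : 1 / cos (c * x) ^ 2 = 1 + tan (c * x) ^ 2 := by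
      rw [← Real.inv_one_add_tan_sq (hcos x hx), one_div, inv_inv]
    have hp : φ'' x = - (lam * (m x / b x) * φ x) := by linarith [hode x hx]
    rw [hF]
    rw [hs, hp] at hd
    refine HasDerivWithinAt.congr_deriv hd ?_
    simp only [Pi.mul_apply]
    ring
  have hmono : MonotoneOn F (Icc (0:ℝ) 1) := by
    refine monotoneOn_of_hasDerivWithinAt_nonneg (convex_Icc 0 1)
      (fun x hx => (hder x hx).continuousWithinAt)
      (fun x hx => (hder x (interior_subset hx)).mono interior_subset) ?_
    intro x hx
    have := hq x (interior_subset hx)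
    have h5 : 0 ≤ c ^ 2 - lam * (m x / b x) := by linarith
    positivity
  have hF0 : F 0 = 0 := by simp [hF, h0]
  have hF1 : F 1 = 0 := by simp [hF, hl]
  have hFz : ∀ x ∈ Icc (0:ℝ) 1, F x = 0 := fun x hx =>
    le_antisymm (hF1 ▸ hmono hx ho hx.2) (hF0 ▸ hmono hz hx hx.1)
  have hd0 : HasDerivWithinAt F 0 (Icc (0:ℝ) 1) x0 :=
    (hasDerivWithinAt_const x0 _ (0:ℝ)).congr hFz (hFz x0 hx0)
  have he := (uniqueDiffOn_Icc (zero_lt_one' ℝ) x0 hx0).eq_deriv _ hd0 (hder x0 hx0)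
  have h6 : 0 < (c ^ 2 - lam * (m x0 / b x0)) * (φ x0) ^ 2 :=
    mul_pos (by linarith [hq x0 hx0]) (by positivity)
  nlinarith [sq_nonneg (φ' x0 + c * tan (c * x0) * φ x0)]
end

section
/- Let m, b : [0,1] → ℝ be continuous with 0 < m_min ≤ m(x) ≤ m_max and 0 < b_min ≤ b(x) ≤ b_max for all x ∈ [0,1], let ρ, N > 0, and let λ ∈ ℝ be such that there exists a nonzero twice continuously differentiable φ : [0,1] → ℝ with φ''(x) + λ·(m(x)/b(x))·φ(x) = 0 on [0,1], φ'(0) = 0 and φ(1) = 0. If in addition λ < 4·ρ·N², then every complex root s of s² + (λ/N²)·s + (ρ·λ/N²) = 0 satisfies Re(s) = −λ/(2·N²) ≤ −π²·b_min/(8·m_max·N²). -/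
open Real Set

theorem eig_aux (q φ φ' φ'' : ℝ → ℝ) (c : ℝ) (hc : c < π ^ 2 / 4)
    (hq : ∀ x ∈ Icc (0:ℝ) 1, q x ≤ max c 0)
    (h1 : ∀ x ∈ Icc (0:ℝ) 1, HasDerivWithinAt φ (φ' x) (Icc (0:ℝ) 1) x)
    (h2 : ∀ x ∈ Icc (0:ℝ) 1, HasDerivWithinAt φ' (φ'' x) (Icc (0:ℝ) 1) x)
    (he : ∀ x ∈ Icc (0:ℝ) 1, φ'' x + q x * φ x = 0)
    (h0 : φ' 0 = 0) (hl : φ 1 = 0) : ∀ x ∈ Icc (0:ℝ) 1, φ x = 0 := by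
  have hpi := Real.pi_pos
  have hm : max c 0 < π ^ 2 / 4 := max_lt hc (by positivity)
  have hm0 : 0 ≤ max c 0 := le_max_right _ _
  obtain ⟨ω, hω0, hω1, hω2⟩ : ∃ ω : ℝ, 0 < ω ∧ ω < π / 2 ∧ max c 0 < ω ^ 2 := by
    refine ⟨√((max c 0 + π ^ 2 / 4) / 2), by positivity, ?_, ?_⟩
    · rw [Real.sqrt_lt' (by positivity)]; nlinarith
    · rw [Real.sq_sqrt (by positivity)]; linarith
  have hcos : ∀ x ∈ Icc (0:ℝ) 1, 0 < cos (ω * x) := by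
    intro x hx
    apply Real.cos_pos_of_mem_Ioo
    constructor <;> nlinarith [hx.1, hx.2]
  have hG : ∀ x ∈ Icc (0:ℝ) 1, HasDerivWithinAt
      (fun x => φ x * φ' x + ω * tan (ω * x) * φ x ^ 2)
      ((φ' x + ω * tan (ω * x) * φ x) ^ 2 + (ω ^ 2 - q x) * φ x ^ 2) (Icc (0:ℝ) 1) x := by
    intro x hx
    have hc' := (hcos x hx).ne'
    have ht : HasDerivAt (fun x => tan (ω * x)) (1 / cos (ω * x) ^ 2 * ω) x := by
      have h3 : HasDerivAt (fun x : ℝ => ω * x) ω x := by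
        simpa using (hasDerivAt_id x).const_mul ω
      exact (Real.hasDerivAt_tan hc').comp x h3
    have hd := ((h1 x hx).mul (h2 x hx)).add
      ((ht.hasDerivWithinAt.const_mul ω).mul ((h1 x hx).pow 2))
    have e1 : 1 / cos (ω * x) ^ 2 = 1 + tan (ω * x) ^ 2 := by
      rw [Real.tan_eq_sin_div_cos]
      field_simp
      linarith [Real.sin_sq_add_cos_sq (ω * x)]
    have e2 : φ'' x = - (q x * φ x) := by linarith [he x hx]
    refine hd.congr_deriv ?_
    rw [e1, e2]
    simp
    ring
  have hmono : MonotoneOn (fun x => φ x * φ' x + ω * tan (ω * x) * φ x ^ 2) (Icc (0:ℝ) 1) := by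
    refine monotoneOn_of_hasDerivWithinAt_nonneg (convex_Icc 0 1)
      (fun x hx => (hG x hx).continuousWithinAt)
      (fun x hx => (hG x (interior_subset hx)).mono interior_subset) ?_
    intro x hx
    have := hq x (interior_subset hx)
    have : 0 ≤ ω ^ 2 - q x := by linarith
    positivity
  have hz : ∀ x ∈ Icc (0:ℝ) 1, φ x * φ' x + ω * tan (ω * x) * φ x ^ 2 = 0 := by
    intro x hx
    have a := hmono (left_mem_Icc.2 zero_le_one) hx hx.1
    have b := hmono hx (right_mem_Icc.2 zero_le_one) hx.2
    simp [h0, hl] at a b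
    linarith
  intro x hx
  have hd0 : HasDerivWithinAt (fun x => φ x * φ' x + ω * tan (ω * x) * φ x ^ 2) 0
      (Icc (0:ℝ) 1) x :=
    (hasDerivWithinAt_const x _ (0:ℝ)).congr hz (hz x hx)
  have he0 := (uniqueDiffOn_Icc (zero_lt_one' ℝ) x hx).eq_deriv _ (hG x hx) hd0
  have hp : 0 < ω ^ 2 - q x := by linarith [hq x hx]
  have : (ω ^ 2 - q x) * φ x ^ 2 = 0 := by
    have : 0 ≤ (ω ^ 2 - q x) * φ x ^ 2 := by positivity
    linarith [sq_nonneg (φ' x + ω * tan (ω * x) * φ x)]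
  simpa [hp.ne'] using this

/-- Stability margin for the heterogeneous symmetric platoon (Lemma 2): if `λ` is an
eigenvalue of `φ'' + λ(m/b)φ = 0`, `φ'(0) = 0`, `φ(1) = 0` and `λ < 4ρN²`, then every
complex root of `s² + (λ/N²)s + (ρλ/N²) = 0` has real part
`-λ/(2N²) ≤ -π² b_min/(8 m_max N²)`. -/
theorem stmt_10 (m b : ℝ → ℝ) (mmin mmax bmin bmax ρ N : ℝ)
    (hmc : ContinuousOn m (Icc (0:ℝ) 1)) (hbc : ContinuousOn b (Icc (0:ℝ) 1))
    (hmmin : 0 < mmin) (hbmin : 0 < bmin) (hρ : 0 < ρ) (hN : 0 < N)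
    (hmb : ∀ x ∈ Icc (0:ℝ) 1, mmin ≤ m x ∧ m x ≤ mmax)
    (hbb : ∀ x ∈ Icc (0:ℝ) 1, bmin ≤ b x ∧ b x ≤ bmax)
    (lam : ℝ)
    (hex : ∃ φ φ' φ'' : ℝ → ℝ,
      (∀ x ∈ Icc (0:ℝ) 1, HasDerivWithinAt φ (φ' x) (Icc (0:ℝ) 1) x) ∧
      (∀ x ∈ Icc (0:ℝ) 1, HasDerivWithinAt φ' (φ'' x) (Icc (0:ℝ) 1) x) ∧
      ContinuousOn φ'' (Icc (0:ℝ) 1) ∧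
      (∃ x ∈ Icc (0:ℝ) 1, φ x ≠ 0) ∧
      (∀ x ∈ Icc (0:ℝ) 1, φ'' x + lam * (m x / b x) * φ x = 0) ∧
      φ' 0 = 0 ∧ φ 1 = 0)
    (hdisc : lam < 4 * ρ * N ^ 2) :
    ∀ s : ℂ, s ^ 2 + ((lam / N ^ 2 : ℝ) : ℂ) * s + ((ρ * lam / N ^ 2 : ℝ) : ℂ) = 0 →
      s.re = -lam / (2 * N ^ 2) ∧ s.re ≤ -(π ^ 2 * bmin / (8 * mmax * N ^ 2)) := by
  obtain ⟨φ, φ', φ'', h1, h2, -, ⟨x0, hx0, hne⟩, he, h0, hl⟩ := hex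
  have hmm : 0 < mmax := by
    have := hmb 0 (by simp)
    linarith [this.1, this.2]
  have key : π ^ 2 / 4 ≤ lam * (mmax / bmin) := by
    by_contra! hlt
    refine hne (eig_aux (fun x => lam * (m x / b x)) φ φ' φ'' _ hlt ?_ h1 h2 he h0 hl x0 hx0)
    intro x hx
    obtain ⟨ha, ha'⟩ := hmb x hx
    obtain ⟨hb, hb'⟩ := hbb x hx
    have hmx : 0 < m x := by linarith
    have hbx : 0 < b x := by linarith
    have hr : 0 ≤ m x / b x := by positivity
    rcases le_total lam 0 with hl0 | hl0
    · exact le_max_of_le_right (mul_nonpos_of_nonpos_of_nonneg hl0 hr)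
    · apply le_max_of_le_left
      gcongr
  have hpi := Real.pi_pos
  have key2 : π ^ 2 * bmin ≤ 4 * mmax * lam := by
    rw [← mul_div_assoc, le_div_iff₀ hbmin] at key
    linarith
  have hlam : 0 < lam := by
    have : 0 < π ^ 2 * bmin := by positivity
    by_contra! h
    nlinarith
  intro s hs
  have hN2 : 0 < N ^ 2 := by positivity
  obtain ⟨a, hadef⟩ : ∃ a, a = lam / N ^ 2 := ⟨_, rfl⟩
  have ha : 0 < a := by rw [hadef]; positivity
  have ha4 : a < 4 * ρ := by rw [hadef, div_lt_iff₀ hN2]; exact hdisc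
  rw [mul_div_assoc, ← hadef] at hs
  have hre := congrArg Complex.re hs
  have him := congrArg Complex.im hs
  simp [pow_two] at hre him
  have hs2 : s.re = -a / 2 := by
    by_cases hv : s.im = 0
    · exfalso
      rw [hv] at hre
      nlinarith [sq_nonneg (s.re + a / 2), mul_pos ha (sub_pos.2 ha4)]
    · have : s.im * (2 * s.re + a) = 0 := by linarith
      rcases mul_eq_zero.1 this with h | h
      · exact absurd h hv
      · linarith
  have hs3 : s.re = -lam / (2 * N ^ 2) := by
    rw [hs2, hadef]; field_simp
  refine ⟨hs3, ?_⟩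
  rw [hs3, neg_div, neg_le_neg_iff, div_le_div_iff₀ (by positivity) (by positivity)]
  nlinarith [mul_le_mul_of_nonneg_right key2 hN2.le]
end

section
/- Let ε > 0, N > 0 and λ ∈ ℝ with λ ≤ ε². Then there is no twice continuously differentiable function φ : [0,1] → ℝ, not identically zero, satisfying φ''(x) + 2·ε·N·φ'(x) + λ·N²·φ(x) = 0 for all x ∈ [0,1] together with φ'(0) = 0 and φ(1) = 0. -/
open Real Set

/-- The boundary value problem `φ'' + 2εN φ' + λN² φ = 0`, `φ'(0) = 0`, `φ(1) = 0`
(from equally asymmetric position and velocity feedback) has no eigenvalue `λ ≤ ε²`. -/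
theorem stmt_11 (ε N lam : ℝ) (hε : 0 < ε) (hN : 0 < N) (hlam : lam ≤ ε ^ 2) :
    ¬ ∃ φ φ' φ'' : ℝ → ℝ,
      (∀ x ∈ Icc (0:ℝ) 1, HasDerivWithinAt φ (φ' x) (Icc (0:ℝ) 1) x) ∧
      (∀ x ∈ Icc (0:ℝ) 1, HasDerivWithinAt φ' (φ'' x) (Icc (0:ℝ) 1) x) ∧
      ContinuousOn φ'' (Icc (0:ℝ) 1) ∧
      (∃ x ∈ Icc (0:ℝ) 1, φ x ≠ 0) ∧
      (∀ x ∈ Icc (0:ℝ) 1, φ'' x + 2 * ε * N * φ' x + lam * N ^ 2 * φ x = 0) ∧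
      φ' 0 = 0 ∧ φ 1 = 0 := by
  rintro ⟨φ, φ', φ'', h1, h2, -, ⟨x, hx, hne⟩, hode, h0, hb⟩
  have hE : ∀ x : ℝ, HasDerivWithinAt (fun x => Real.exp (2 * (ε * N) * x))
      (Real.exp (2 * (ε * N) * x) * (2 * (ε * N))) (Icc (0:ℝ) 1) x := by
    intro x
    have := ((hasDerivAt_id x).const_mul (2 * (ε * N))).exp
    simpa using this.hasDerivWithinAt
  have hmono : ∀ G G' : ℝ → ℝ,
      (∀ x ∈ Icc (0:ℝ) 1, HasDerivWithinAt G (G' x) (Icc (0:ℝ) 1) x) →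
      (∀ x ∈ Icc (0:ℝ) 1, 0 ≤ G' x) → MonotoneOn G (Icc (0:ℝ) 1) := by
    intro G G' hG hG'
    refine monotoneOn_of_hasDerivWithinAt_nonneg (f' := G') (convex_Icc 0 1)
      (fun x hx => (hG x hx).continuousWithinAt) ?_ ?_
    · intro x hx
      exact (hG x (interior_subset hx)).mono interior_subset
    · intro x hx
      exact hG' x (interior_subset hx)
  have m0 : (0:ℝ) ∈ Icc (0:ℝ) 1 := by simp
  have m1 : (1:ℝ) ∈ Icc (0:ℝ) 1 := by simp
  have hG := hmono (fun x => Real.exp (2 * (ε * N) * x) * (φ x * (φ' x + ε * N * φ x)))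
    (fun x => Real.exp (2 * (ε * N) * x) *
      ((φ' x + ε * N * φ x) ^ 2 + (ε ^ 2 - lam) * (N * φ x) ^ 2))
    (by
      intro x hx
      have := (hE x).mul ((h1 x hx).mul ((h2 x hx).add ((h1 x hx).const_mul (ε * N))))
      refine this.congr_deriv ?_
      have e : φ'' x = - (2 * ε * N * φ' x) - lam * N ^ 2 * φ x := by linarith [hode x hx]
      simp only [Pi.mul_apply, Pi.add_apply, e]
      ring)
    (by
      intro x _
      have : 0 ≤ ε ^ 2 - lam := by linarith
      positivity)
  have hGn : ∀ x ∈ Icc (0:ℝ) 1,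
      0 ≤ Real.exp (2 * (ε * N) * x) * (φ x * (φ' x + ε * N * φ x)) := by
    intro x hx
    refine le_trans ?_ (hG m0 hx hx.1)
    simp only [h0, mul_zero, Real.exp_zero, one_mul, zero_add]
    have : 0 ≤ ε * N * (φ 0 * φ 0) := mul_nonneg (by positivity) (mul_self_nonneg _)
    linarith
  have hH := hmono (fun x => Real.exp (2 * (ε * N) * x) * (φ x * φ x))
    (fun x => 2 * (Real.exp (2 * (ε * N) * x) * (φ x * (φ' x + ε * N * φ x))))
    (by
      intro x hx
      have := (hE x).mul ((h1 x hx).mul (h1 x hx))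
      refine this.congr_deriv ?_
      simp only [Pi.mul_apply]
      ring)
    (fun x hx => mul_nonneg (by norm_num) (hGn x hx))
  have h := hH hx m1 hx.2
  simp only [hb, mul_zero] at h
  have : 0 < Real.exp (2 * (ε * N) * x) * (φ x * φ x) :=
    mul_pos (Real.exp_pos _) (mul_self_pos.mpr hne)
  linarith
end

section
/- Let ε > 0, N > 0 and λ > ε², and set a := N·√(λ − ε²). There exists a twice continuously differentiable function φ : [0,1] → ℝ, not identically zero, satisfying φ''(x) + 2·ε·N·φ'(x) + λ·N²·φ(x) = 0 for all x ∈ [0,1], φ'(0) = 0 and φ(1) = 0, if and only if ε·N·sin(a) + a·cos(a) = 0. -/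
open Real Set

theorem aux_const (f : ℝ → ℝ)
    (h : ∀ x ∈ Icc (0:ℝ) 1, HasDerivWithinAt f 0 (Icc (0:ℝ) 1) x) (x : ℝ)
    (hx : x ∈ Icc (0:ℝ) 1) : f x = f 0 := by
  have := (convex_Icc (0:ℝ) 1).norm_image_sub_le_of_norm_hasDerivWithin_le
    (C := 0) h (by simp) (left_mem_Icc.2 zero_le_one) hx
  rw [zero_mul] at this
  exact sub_eq_zero.1 (norm_le_zero_iff.1 this)

/-- For `λ > ε²` and `a = N√(λ-ε²)`, the boundary value problem
`φ'' + 2εN φ' + λN² φ = 0`, `φ'(0) = 0`, `φ(1) = 0` has a nontrivial solution iff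
`εN sin(a) + a cos(a) = 0`. -/
theorem stmt_12 (ε N lam : ℝ) (hε : 0 < ε) (hN : 0 < N) (hlam : ε ^ 2 < lam)
    (a : ℝ) (ha : a = N * Real.sqrt (lam - ε ^ 2)) :
    (∃ φ φ' φ'' : ℝ → ℝ,
      (∀ x ∈ Icc (0:ℝ) 1, HasDerivWithinAt φ (φ' x) (Icc (0:ℝ) 1) x) ∧
      (∀ x ∈ Icc (0:ℝ) 1, HasDerivWithinAt φ' (φ'' x) (Icc (0:ℝ) 1) x) ∧
      ContinuousOn φ'' (Icc (0:ℝ) 1) ∧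
      (∃ x ∈ Icc (0:ℝ) 1, φ x ≠ 0) ∧
      (∀ x ∈ Icc (0:ℝ) 1, φ'' x + 2 * ε * N * φ' x + lam * N ^ 2 * φ x = 0) ∧
      φ' 0 = 0 ∧ φ 1 = 0) ↔
    ε * N * Real.sin a + a * Real.cos a = 0 := by
  have ha0 : 0 < a := by
    rw [ha]; exact mul_pos hN (Real.sqrt_pos.2 (by linarith))
  have ha2 : lam * N ^ 2 = a ^ 2 + (ε * N) ^ 2 := by
    rw [ha, mul_pow, Real.sq_sqrt (by linarith)]; ring
  have h2 : 2 * ε * N = 2 * (ε * N) := by ring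
  rw [h2, ha2]
  generalize ε * N = k
  have hs : ∀ x : ℝ, HasDerivAt (fun x => Real.sin (a * x)) (Real.cos (a * x) * a) x := fun x => by
    simpa using ((hasDerivAt_id x).const_mul a).sin
  have hc : ∀ x : ℝ, HasDerivAt (fun x => Real.cos (a * x)) (-Real.sin (a * x) * a) x := fun x => by
    simpa using ((hasDerivAt_id x).const_mul a).cos
  have he : ∀ c x : ℝ, HasDerivAt (fun x => Real.exp (c * x)) (Real.exp (c * x) * c) x :=
    fun c x => by simpa using ((hasDerivAt_id x).const_mul c).exp
  constructor
  · rintro ⟨φ, φ', φ'', h1, h2, -, ⟨z, hz, hz0⟩, hode, hb0, hb1⟩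
    have hA := aux_const
      (fun x => Real.exp (k * x) * (a * φ x * Real.cos (a * x)
        - (φ' x + k * φ x) * Real.sin (a * x))) (by
        intro x hx
        have hd := ((he k x).hasDerivWithinAt (s := Icc (0:ℝ) 1)).mul
          ((((h1 x hx).const_mul a).mul (hc x).hasDerivWithinAt).sub
            (((h2 x hx).add ((h1 x hx).const_mul k)).mul (hs x).hasDerivWithinAt))
        refine hd.congr_deriv ?_
        simp only [Pi.mul_apply, Pi.add_apply, Pi.sub_apply]
        linear_combination (-Real.exp (k * x) * Real.sin (a * x)) * hode x hx)
    have hB := aux_const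
      (fun x => Real.exp (k * x) * (a * φ x * Real.sin (a * x)
        + (φ' x + k * φ x) * Real.cos (a * x))) (by
        intro x hx
        have hd := ((he k x).hasDerivWithinAt (s := Icc (0:ℝ) 1)).mul
          ((((h1 x hx).const_mul a).mul (hs x).hasDerivWithinAt).add
            (((h2 x hx).add ((h1 x hx).const_mul k)).mul (hc x).hasDerivWithinAt))
        refine hd.congr_deriv ?_
        simp only [Pi.mul_apply, Pi.add_apply, Pi.sub_apply]
        linear_combination (Real.exp (k * x) * Real.cos (a * x)) * hode x hx)
    have key : ∀ x ∈ Icc (0:ℝ) 1, Real.exp (k * x) * (a * φ x)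
        = φ 0 * (k * Real.sin (a * x) + a * Real.cos (a * x)) := by
      intro x hx
      have h3 := hA x hx
      have h4 := hB x hx
      simp only [mul_zero, Real.exp_zero, Real.cos_zero, Real.sin_zero, hb0] at h3 h4
      linear_combination Real.cos (a * x) * h3 + Real.sin (a * x) * h4
        - Real.exp (k * x) * (a * φ x) * Real.sin_sq_add_cos_sq (a * x)
    have k1 := key 1 (right_mem_Icc.2 zero_le_one)
    rw [hb1] at k1
    simp only [mul_zero, mul_one] at k1
    rcases mul_eq_zero.1 k1.symm with h | h
    · exfalso
      have k2 := key z hz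
      rw [h, zero_mul] at k2
      exact (mul_ne_zero (Real.exp_pos _).ne' (mul_ne_zero ha0.ne' hz0)) k2
    · exact h
  · intro h
    refine ⟨fun x => Real.exp (-k * x) * (a * Real.cos (a * x) + k * Real.sin (a * x)),
      fun x => -(a ^ 2 + k ^ 2) * (Real.exp (-k * x) * Real.sin (a * x)),
      fun x => -(a ^ 2 + k ^ 2) * (Real.exp (-k * x) *
        (a * Real.cos (a * x) - k * Real.sin (a * x))), ?_, ?_, ?_, ?_, ?_, ?_, ?_⟩
    · intro x _
      refine (((he (-k) x).mul (((hc x).const_mul a).add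
        ((hs x).const_mul k))).congr_deriv ?_).hasDerivWithinAt
      simp only [Pi.add_apply]
      ring
    · intro x _
      refine ((((he (-k) x).mul (hs x)).const_mul _).congr_deriv ?_).hasDerivWithinAt
      ring
    · fun_prop
    · exact ⟨0, left_mem_Icc.2 zero_le_one, by simp [ha0.ne']⟩
    · intro x _
      ring
    · simp
    · simp only [mul_one]
      rw [add_comm, h, mul_zero]
end

section
/- Let c > 0. For every positive integer ℓ there exists exactly one a in the open interval ((2ℓ−1)·π/2, ℓ·π) satisfying c·sin(a) + a·cos(a) = 0. Moreover, every a > 0 satisfying c·sin(a) + a·cos(a) = 0 lies in ((2ℓ−1)·π/2, ℓ·π) for some positive integer ℓ. -/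
open Real Set

lemma key_aux (c : ℝ) (n : ℕ) (a : ℝ) :
    c * Real.sin a + a * Real.cos a = 0 ↔
      a * Real.cos (n * π - a) - c * Real.sin (n * π - a) = 0 := by
  have h1 : Real.cos (n * π - a) = (-1) ^ n * Real.cos a := Real.cos_nat_mul_pi_sub a n
  have h2 : Real.sin (n * π - a) = -((-1) ^ n * Real.sin a) := Real.sin_nat_mul_pi_sub a n
  have h3 : a * Real.cos (n * π - a) - c * Real.sin (n * π - a)
      = (-1) ^ n * (c * Real.sin a + a * Real.cos a) := by rw [h1, h2]; ring
  rw [h3]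
  simp

lemma mono_aux (c : ℝ) (hc : 0 < c) (n : ℕ) (a b : ℝ)
    (ha : (2 * (n:ℝ) - 1) * π / 2 < a) (ha0 : 0 < a) (hb : b < n * π) (hab : a < b) :
    a * Real.cos (n * π - a) - c * Real.sin (n * π - a) <
      b * Real.cos (n * π - b) - c * Real.sin (n * π - b) := by
  have hp := Real.pi_pos
  have h1 : Real.sin (n * π - b) < Real.sin (n * π - a) :=
    Real.sin_lt_sin_of_lt_of_le_pi_div_two (by linarith) (by linarith) (by linarith)
  have h2 : Real.cos (n * π - a) < Real.cos (n * π - b) :=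
    Real.cos_lt_cos_of_nonneg_of_le_pi_div_two (by linarith) (by linarith) (by linarith)
  have h3 : 0 < Real.cos (n * π - a) :=
    Real.cos_pos_of_mem_Ioo ⟨by linarith, by linarith⟩
  nlinarith [mul_lt_mul_of_pos_left h1 hc, mul_lt_mul_of_pos_left h2 ha0,
    mul_pos (sub_pos.2 hab) (h3.trans h2)]

/-- For `c > 0`, the transcendental equation `c sin(a) + a cos(a) = 0` has exactly one
solution in each interval `((2ℓ-1)π/2, ℓπ)` for every positive integer `ℓ`, and every
positive solution lies in such an interval. -/
theorem stmt_13 (c : ℝ) (hc : 0 < c) :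
    (∀ ℓ : ℕ, 0 < ℓ →
      ∃! a : ℝ, a ∈ Ioo ((2 * (ℓ:ℝ) - 1) * π / 2) ((ℓ:ℝ) * π) ∧
        c * Real.sin a + a * Real.cos a = 0) ∧
    (∀ a : ℝ, 0 < a → c * Real.sin a + a * Real.cos a = 0 →
      ∃ ℓ : ℕ, 0 < ℓ ∧ a ∈ Ioo ((2 * (ℓ:ℝ) - 1) * π / 2) ((ℓ:ℝ) * π)) := by
  have hp := Real.pi_pos
  refine ⟨fun n hn => ?_, fun a ha h => ?_⟩
  · have hn1 : (1:ℝ) ≤ n := by exact_mod_cast hn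
    have hpos : 0 < (2 * (n:ℝ) - 1) * π / 2 := by
      have : 0 < (2 * (n:ℝ) - 1) := by linarith
      positivity
    have hle : (2 * (n:ℝ) - 1) * π / 2 ≤ n * π := by linarith
    have hcont : ContinuousOn
        (fun a : ℝ => a * Real.cos (n * π - a) - c * Real.sin (n * π - a))
        (Icc ((2 * (n:ℝ) - 1) * π / 2) (n * π)) := by fun_prop
    have hl : (n:ℝ) * π - (2 * (n:ℝ) - 1) * π / 2 = π / 2 := by ring
    have hmem := intermediate_value_Ioo hle hcont
    have h0 : (0:ℝ) ∈ Ioo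
        ((fun a : ℝ => a * Real.cos (n * π - a) - c * Real.sin (n * π - a))
          ((2 * (n:ℝ) - 1) * π / 2))
        ((fun a : ℝ => a * Real.cos (n * π - a) - c * Real.sin (n * π - a)) (n * π)) := by
      constructor
      · simp only [hl, Real.cos_pi_div_two, Real.sin_pi_div_two]; linarith
      · simp only [sub_self, Real.cos_zero, Real.sin_zero]; linarith
    obtain ⟨a, ha, hfa⟩ := hmem h0
    refine ⟨a, ⟨ha, (key_aux c n a).2 hfa⟩, ?_⟩
    rintro b ⟨hb, hfb⟩
    have hfb' := (key_aux c n b).1 hfb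
    have hfa' := (key_aux c n a).1 ((key_aux c n a).2 hfa)
    rcases lt_trichotomy b a with hlt | heq | hlt
    · have := mono_aux c hc n b a hb.1 (hpos.trans hb.1) ha.2 hlt
      linarith
    · exact heq
    · have := mono_aux c hc n a b ha.1 (hpos.trans ha.1) hb.2 hlt
      linarith
  · have hd : 0 < a / π := by positivity
    have h1 : a ≤ ⌈a / π⌉₊ * π := (div_le_iff₀ hp).1 (Nat.le_ceil _)
    have h2 : (⌈a / π⌉₊ : ℝ) * π < a + π := by
      have := mul_lt_mul_of_pos_right (Nat.ceil_lt_add_one hd.le) hp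
      have e : (a / π + 1) * π = a + π := by field_simp
      linarith
    refine ⟨⌈a / π⌉₊, Nat.ceil_pos.2 hd, ?_⟩
    generalize ⌈a / π⌉₊ = n at h1 h2
    have hk := (key_aux c n a).1 h
    have hlt : a < n * π := by
      rcases h1.lt_or_eq with h | h
      · exact h
      · rw [← h] at hk
        simp at hk
        linarith
    refine ⟨?_, hlt⟩
    by_contra! hcon
    have hs : 0 < Real.sin (n * π - a) :=
      Real.sin_pos_of_pos_of_lt_pi (by linarith) (by linarith)
    have hco : Real.cos (n * π - a) ≤ 0 :=
      Real.cos_nonpos_of_pi_div_two_le_of_le (by linarith) (by linarith)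
    nlinarith [mul_pos hc hs, mul_nonneg ha.le (neg_nonneg.2 hco)]
end

section
/- Let b₀, k₀ > 0 and ε ∈ (0,1), and let λ be a real number with λ ≥ ε². Then every complex root s of the quadratic s² + b₀·λ·s + k₀·λ = 0 satisfies Re(s) ≤ −min( b₀·ε²/2, k₀/b₀ ). -/
open Real

/-- For `λ ≥ ε²`, every complex root of `s² + b₀λs + k₀λ = 0` satisfies
`Re(s) ≤ -min(b₀ε²/2, k₀/b₀)`. -/
theorem stmt_14 (b₀ k₀ ε lam : ℝ) (hb : 0 < b₀) (hk : 0 < k₀)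
    (hε : ε ∈ Set.Ioo (0:ℝ) 1) (hlam : ε ^ 2 ≤ lam)
    (s : ℂ)
    (hs : s ^ 2 + ((b₀ * lam : ℝ) : ℂ) * s + ((k₀ * lam : ℝ) : ℂ) = 0) :
    s.re ≤ -min (b₀ * ε ^ 2 / 2) (k₀ / b₀) := by
  have hpos : 0 < lam := lt_of_lt_of_le (pow_pos hε.1 2) hlam
  have hre := congrArg Complex.re hs
  have him := congrArg Complex.im hs
  simp only [pow_two, Complex.add_re, Complex.add_im, Complex.mul_re, Complex.mul_im,
    Complex.ofReal_re, Complex.ofReal_im, Complex.zero_re, Complex.zero_im] at hre him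
  have h : s.im * (2 * s.re + b₀ * lam) = 0 := by linarith
  rcases mul_eq_zero.mp h with h0 | h0
  · rw [h0] at hre
    have h1 : b₀ * s.re + k₀ ≤ 0 := by
      by_contra! hc
      nlinarith [mul_pos hpos hc, mul_self_nonneg s.re]
    have h2 : k₀ / b₀ ≤ -s.re := by
      rw [div_le_iff₀ hb]
      linarith
    linarith [min_le_right (b₀ * ε ^ 2 / 2) (k₀ / b₀)]
  · have h1 := mul_le_mul_of_nonneg_left hlam hb.le
    linarith [min_le_left (b₀ * ε ^ 2 / 2) (k₀ / b₀)]
end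

section
/- Let k₀, b₀, N > 0 and ε ∈ (0,1), and let λ ∈ ℝ be such that there exists a nonzero twice continuously differentiable φ : [0,1] → ℝ satisfying φ''(x) + 2·ε·N·φ'(x) + λ·N²·φ(x) = 0 for all x ∈ [0,1], φ'(0) = 0 and φ(1) = 0. Then every complex root s of s² + b₀·λ·s + k₀·λ = 0 satisfies Re(s) ≤ −min( b₀·ε²/2, k₀/b₀ ). -/
open Real Set

/-- Theorem 3 of the paper: if `λ` is an eigenvalue of the boundary value problem
`φ'' + 2εN φ' + λN² φ = 0`, `φ'(0) = 0`, `φ(1) = 0`, then every complex root of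
`s² + b₀λs + k₀λ = 0` satisfies `Re(s) ≤ -min(b₀ε²/2, k₀/b₀)`. -/
theorem stmt_15 (k₀ b₀ N ε : ℝ) (hk : 0 < k₀) (hb : 0 < b₀) (hN : 0 < N)
    (hε : ε ∈ Set.Ioo (0:ℝ) 1) (lam : ℝ)
    (hex : ∃ φ φ' φ'' : ℝ → ℝ,
      (∀ x ∈ Icc (0:ℝ) 1, HasDerivWithinAt φ (φ' x) (Icc (0:ℝ) 1) x) ∧
      (∀ x ∈ Icc (0:ℝ) 1, HasDerivWithinAt φ' (φ'' x) (Icc (0:ℝ) 1) x) ∧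
      ContinuousOn φ'' (Icc (0:ℝ) 1) ∧
      (∃ x ∈ Icc (0:ℝ) 1, φ x ≠ 0) ∧
      (∀ x ∈ Icc (0:ℝ) 1, φ'' x + 2 * ε * N * φ' x + lam * N ^ 2 * φ x = 0) ∧
      φ' 0 = 0 ∧ φ 1 = 0) :
    ∀ s : ℂ, s ^ 2 + ((b₀ * lam : ℝ) : ℂ) * s + ((k₀ * lam : ℝ) : ℂ) = 0 →
      s.re ≤ -min (b₀ * ε ^ 2 / 2) (k₀ / b₀) := by
  obtain ⟨hε0, hε1⟩ := hε
  have hlam : ε ^ 2 ≤ lam := by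
    by_contra hlt
    push Not at hlt
    obtain ⟨φ, φ', φ'', h1, h2, -, ⟨x0, hx0, hne⟩, hode, hn, hd⟩ := hex
    have hE : ∀ x : ℝ, HasDerivWithinAt (fun x => Real.exp (2 * ε * N * x))
        (Real.exp (2 * ε * N * x) * (2 * ε * N)) (Icc (0:ℝ) 1) x := by
      intro x
      have := ((hasDerivAt_id x).const_mul (2 * ε * N)).exp.hasDerivWithinAt (s := Icc (0:ℝ) 1)
      simpa using this
    have hg : ∀ x ∈ Icc (0:ℝ) 1, HasDerivWithinAt
        (fun x => Real.exp (2 * ε * N * x) * (φ x * φ' x + ε * N * (φ x * φ x)))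
        (Real.exp (2 * ε * N * x) * ((φ' x + ε * N * φ x) ^ 2 + (ε ^ 2 - lam) * N ^ 2 * φ x ^ 2))
        (Icc (0:ℝ) 1) x := by
      intro x hx
      refine ((hE x).mul (((h1 x hx).mul (h2 x hx)).add
        (((h1 x hx).mul (h1 x hx)).const_mul (ε * N)))).congr_deriv ?_
      have e : φ'' x = -(2 * ε * N * φ' x) - lam * N ^ 2 * φ x := by linarith [hode x hx]
      simp only [Pi.add_apply, Pi.mul_apply, e]
      ring
    have hh : ∀ x ∈ Icc (0:ℝ) 1, HasDerivWithinAt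
        (fun x => Real.exp (2 * ε * N * x) * (φ x * φ x))
        (2 * (Real.exp (2 * ε * N * x) * (φ x * φ' x + ε * N * (φ x * φ x))))
        (Icc (0:ℝ) 1) x := by
      intro x hx
      refine ((hE x).mul ((h1 x hx).mul (h1 x hx))).congr_deriv ?_
      simp only [Pi.mul_apply]
      ring
    have mg := monotoneOn_of_hasDerivWithinAt_nonneg (convex_Icc (0:ℝ) 1)
      (fun x hx => (hg x hx).continuousWithinAt)
      (fun x hx => (hg x (interior_subset hx)).mono interior_subset)
      (fun x hx => by
        have : 0 ≤ ε ^ 2 - lam := by linarith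
        positivity)
    have g0 : ∀ x ∈ Icc (0:ℝ) 1,
        0 ≤ Real.exp (2 * ε * N * x) * (φ x * φ' x + ε * N * (φ x * φ x)) := by
      intro x hx
      refine le_trans ?_ (mg (left_mem_Icc.2 zero_le_one) hx hx.1)
      simp only [hn, mul_zero, zero_add]
      have := mul_self_nonneg (φ 0)
      positivity
    have mh := monotoneOn_of_hasDerivWithinAt_nonneg (convex_Icc (0:ℝ) 1)
      (fun x hx => (hh x hx).continuousWithinAt)
      (fun x hx => (hh x (interior_subset hx)).mono interior_subset)
      (fun x hx => mul_nonneg zero_le_two (g0 x (interior_subset hx)))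
    have := mh hx0 (right_mem_Icc.2 zero_le_one) hx0.2
    simp only [hd, mul_zero] at this
    have h3 : 0 < Real.exp (2 * ε * N * x0) * (φ x0 * φ x0) :=
      mul_pos (Real.exp_pos _) (mul_self_pos.2 hne)
    linarith
  have hl : 0 < lam := lt_of_lt_of_le (by positivity) hlam
  intro s hs
  have hre := congrArg Complex.re hs
  have him := congrArg Complex.im hs
  simp only [pow_two, Complex.add_re, Complex.add_im, Complex.mul_re, Complex.mul_im,
    Complex.ofReal_re, Complex.ofReal_im, Complex.zero_re, Complex.zero_im] at hre him
  have him' : s.im * (2 * s.re + b₀ * lam) = 0 := by linarith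
  rcases mul_eq_zero.1 him' with h | h
  · rw [h] at hre
    have h4 : lam * (b₀ * s.re + k₀) ≤ 0 := by nlinarith [mul_self_nonneg s.re]
    have h5 : b₀ * s.re + k₀ ≤ 0 := by
      by_contra hc
      push Not at hc
      linarith [mul_pos hl hc]
    have h6 : k₀ / b₀ ≤ -s.re := by
      rw [div_le_iff₀ hb]; linarith
    linarith [min_le_right (b₀ * ε ^ 2 / 2) (k₀ / b₀)]
  · have := mul_le_mul_of_nonneg_left hlam hb.le
    linarith [min_le_left (b₀ * ε ^ 2 / 2) (k₀ / b₀)]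
end
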